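/- arXiv:0909.4250 — 2 statements merged into one kernel-verified Lean document; each statement's English description precedes it below -/
import Mathlib

section
/- Let (X, σ_X) be a one-sided subshift over a finite alphabet and let η, μ ∈ M(X, σ_X). If η is not absolutely continuous with respect to μ, then lim_{n→∞} Σ_{I ∈ L_n(X)} ( η(I) log μ(I) − η(I) log η(I) ) = −∞ (with the conventions 0 log 0 = 0 and η(I) log 0 = −∞ when η(I) > 0). -/
open MeasureTheory Filter Topology
open scoped Classical ENNReal NNReal

noncomputable section

/-- The left shift on one-sided sequences. -/
def shiftMap {A : Type} : (ℕ → A) → (ℕ → A) := fun x n => x (n + 1)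

/-- The cylinder set of a finite word. -/
def cyl {A : Type} (I : List A) : Set (ℕ → A) :=
  {x | ∀ i : Fin I.length, x i = I.get i}

/-- Membership of a word in the language of `X`. -/
def Lang {A : Type} (X : Set (ℕ → A)) (I : List A) : Prop :=
  (cyl I ∩ X).Nonempty

/-- `X` is a (nonempty) one-sided subshift. -/
def IsSubshift {A : Type} [TopologicalSpace A] (X : Set (ℕ → A)) : Prop :=
  X.Nonempty ∧ IsCompact X ∧ shiftMap '' X ⊆ X

/-- weak `p`-specification -/
def WeakSpecification {A : Type} (X : Set (ℕ → A)) (p : ℕ) : Prop :=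
  ∀ I J : List A, Lang X I → Lang X J →
    ∃ K : List A, K.length ≤ p ∧ Lang X (I ++ K ++ J)

/-- `p`-specification -/
def Specification {A : Type} (X : Set (ℕ → A)) (p : ℕ) : Prop :=
  ∀ I J : List A, Lang X I → Lang X J →
    ∃ K : List A, K.length = p ∧ Lang X (I ++ K ++ J)

/-- invariant probability measures supported on `X` (predicate on plain measures) -/
def InvOn {A : Type} [MeasurableSpace A] (X : Set (ℕ → A)) (μ : Measure (ℕ → A)) : Prop :=
  IsProbabilityMeasure μ ∧ μ.map shiftMap = μ ∧ μ X = 1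

/-- the set of shift-invariant probability measures on `X` -/
def MInv {A : Type} [MeasurableSpace A] (X : Set (ℕ → A)) :
    Set (ProbabilityMeasure (ℕ → A)) :=
  {μ | (μ : Measure (ℕ → A)).map shiftMap = (μ : Measure (ℕ → A)) ∧
    (μ : Measure (ℕ → A)) X = 1}

/-- measure of a word: `μ([I] ∩ X)` -/
def mw {A : Type} [MeasurableSpace A] (X : Set (ℕ → A)) (μ : Measure (ℕ → A))
    (I : List A) : ℝ :=
  (μ (cyl I ∩ X)).toReal

/-- the initial word of length `n` of a sequence -/
def wordOf {A : Type} (x : ℕ → A) (n : ℕ) : List A := List.ofFn (fun i : Fin n => x i)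

/-- `n`-block entropy -/
def Hblock {A : Type} [Fintype A] [MeasurableSpace A] (X : Set (ℕ → A))
    (μ : Measure (ℕ → A)) (n : ℕ) : ℝ :=
  -∑ w : Fin n → A, mw X μ (List.ofFn w) * Real.log (mw X μ (List.ofFn w))

/-- measure-theoretic entropy (the limit exists for invariant measures; `liminf` realizes it) -/
def ent {A : Type} [Fintype A] [MeasurableSpace A] (X : Set (ℕ → A))
    (μ : Measure (ℕ → A)) : ℝ :=
  liminf (fun n : ℕ => Hblock X μ n / n) atTop

/-- extended logarithm: `log t`, with value `⊥` for `t ≤ 0` -/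
def elog (t : ℝ) : EReal := if t ≤ 0 then ⊥ else ((Real.log t : ℝ) : EReal)

/-- the integral `∫ log g dμ`, valued in `ℝ ∪ {−∞}` -/
def intlog {Ω : Type*} [MeasurableSpace Ω] (μ : Measure Ω) (g : Ω → ℝ) : EReal :=
  ((∫⁻ x, ENNReal.ofReal (Real.log (g x)) ∂μ : ℝ≥0∞) : EReal) -
    ((∫⁻ x, (if g x ≤ 0 then (⊤ : ℝ≥0∞) else ENNReal.ofReal (-Real.log (g x))) ∂μ : ℝ≥0∞) : EReal)

/-- sub-additive potential `Φ = (log φ_n)_{n ≥ 1}` -/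
def SubaddPot {A : Type} [TopologicalSpace A] (X : Set (ℕ → A))
    (φ : ℕ → (ℕ → A) → ℝ) : Prop :=
  (∀ n, 1 ≤ n → ContinuousOn (φ n) X) ∧
  (∀ n, 1 ≤ n → ∀ x ∈ X, 0 ≤ φ n x) ∧
  ∃ c > (0:ℝ), ∀ n m : ℕ, 1 ≤ n → 1 ≤ m → ∀ x ∈ X,
    φ (n + m) x ≤ c * φ n x * φ m (shiftMap^[n] x)

/-- `Φ_*(μ) = lim (1/n) ∫ log φ_n dμ` (realized as a `liminf` in `EReal`) -/
def PhiStar {A : Type} [MeasurableSpace A] (μ : Measure (ℕ → A))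
    (φ : ℕ → (ℕ → A) → ℝ) : EReal :=
  liminf (fun n : ℕ => (((n : ℝ)⁻¹ : ℝ) : EReal) * intlog μ (φ n)) atTop

/-- sub-multiplicative function on the language of `X` -/
def Submult {A : Type} (X : Set (ℕ → A)) (φ : List A → ℝ) : Prop :=
  (∀ I, Lang X I → 0 ≤ φ I) ∧ φ [] = 1 ∧
  ∃ c > (0:ℝ), ∀ I J : List A, Lang X (I ++ J) → φ (I ++ J) ≤ c⁻¹ * φ I * φ J

/-- the potential generated by a word function -/
def genPot {A : Type} (φ : List A → ℝ) : ℕ → (ℕ → A) → ℝ := fun n x => φ (wordOf x n)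

/-- the scaled potential `cΦ = (log φ_n^c)` -/
def scPot {Ω : Type*} (c : ℝ) (φ : ℕ → Ω → ℝ) : ℕ → Ω → ℝ := fun n x => φ n x ^ c

/-- the "pressure value" `Φ_*(μ) + h_μ` -/
def eqVal {A : Type} [Fintype A] [MeasurableSpace A] (X : Set (ℕ → A))
    (φ : ℕ → (ℕ → A) → ℝ) (μ : ProbabilityMeasure (ℕ → A)) : EReal :=
  PhiStar (μ : Measure (ℕ → A)) φ + ((ent X (μ : Measure (ℕ → A)) : ℝ) : EReal)

/-- the set of equilibrium states of `Φ` -/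
def EqSet {A : Type} [Fintype A] [MeasurableSpace A] (X : Set (ℕ → A))
    (φ : ℕ → (ℕ → A) → ℝ) : Set (ProbabilityMeasure (ℕ → A)) :=
  {μ | μ ∈ MInv X ∧ eqVal X φ μ = ⨆ η ∈ MInv X, eqVal X φ η}

/-- sequence map induced by a one-block map -/
def blockMap {A B : Type} (π : A → B) : (ℕ → A) → (ℕ → B) := fun x n => π (x n)

/-- pushforward of a probability measure under a one-block map -/
def pushM {A B : Type} [MeasurableSpace A] [MeasurableSpace B] (π : A → B)
    (μ : ProbabilityMeasure (ℕ → A)) : Measure (ℕ → B) :=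
  (μ : Measure (ℕ → A)).map (blockMap π)

/-- conditional equilibrium states of `Φ` over `ν` -/
def CondEqSet {A B : Type} [Fintype A] [MeasurableSpace A] [MeasurableSpace B]
    (X : Set (ℕ → A)) (π : A → B) (φ : ℕ → (ℕ → A) → ℝ) (ν : Measure (ℕ → B)) :
    Set (ProbabilityMeasure (ℕ → A)) :=
  {μ | μ ∈ MInv X ∧ pushM π μ = ν ∧
    eqVal X φ μ = ⨆ η ∈ {η | η ∈ MInv X ∧ pushM π η = ν}, eqVal X φ η}

/-- the projected word function `ψ(J) = Σ_{I : πI = J} φ(I)` -/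
def psiProj {A B : Type} [Fintype A] (X : Set (ℕ → A)) (π : A → B) (φ : List A → ℝ)
    (J : List B) : ℝ :=
  ∑ w : Fin J.length → A,
    if Lang X (List.ofFn w) ∧ List.map π (List.ofFn w) = J then φ (List.ofFn w) else 0

/-- `φ^{(2)}(J) = (Σ_{I : πI = J} φ(I)^{1/a₁})^{a₁}` -/
def phiTwo {A B : Type} [Fintype A] (X : Set (ℕ → A)) (π : A → B) (φ : List A → ℝ)
    (a₁ : ℝ) (J : List B) : ℝ :=
  (∑ w : Fin J.length → A,
    if Lang X (List.ofFn w) ∧ List.map π (List.ofFn w) = J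
    then φ (List.ofFn w) ^ a₁⁻¹ else 0) ^ a₁

/-- `a`-weighted pressure value for `k = 2` -/
def wVal2 {A B : Type} [Fintype A] [Fintype B] [MeasurableSpace A] [MeasurableSpace B]
    (X : Set (ℕ → A)) (Y : Set (ℕ → B)) (π : A → B) (φ : ℕ → (ℕ → A) → ℝ)
    (a₁ a₂ : ℝ) (μ : ProbabilityMeasure (ℕ → A)) : EReal :=
  PhiStar (μ : Measure (ℕ → A)) φ +
    ((a₁ * ent X (μ : Measure (ℕ → A)) + a₂ * ent Y (pushM π μ) : ℝ) : EReal)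

/-- the set of `a`-weighted equilibrium states, `k = 2` -/
def WEqSet2 {A B : Type} [Fintype A] [Fintype B] [MeasurableSpace A] [MeasurableSpace B]
    (X : Set (ℕ → A)) (Y : Set (ℕ → B)) (π : A → B) (φ : ℕ → (ℕ → A) → ℝ)
    (a₁ a₂ : ℝ) : Set (ProbabilityMeasure (ℕ → A)) :=
  {μ | μ ∈ MInv X ∧ wVal2 X Y π φ a₁ a₂ μ = ⨆ η ∈ MInv X, wVal2 X Y π φ a₁ a₂ η}

/-- convexity of a set of probability measures -/
def ConvexPM {Ω : Type*} [MeasurableSpace Ω] (S : Set (ProbabilityMeasure Ω)) : Prop :=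
  ∀ μ₁ ∈ S, ∀ μ₂ ∈ S, ∀ t : ℝ, 0 ≤ t → t ≤ 1 → ∀ μ : ProbabilityMeasure Ω,
    (μ : Measure Ω) = ENNReal.ofReal t • (μ₁ : Measure Ω) +
      ENNReal.ofReal (1 - t) • (μ₂ : Measure Ω) → μ ∈ S

/-- extreme points of a set of probability measures -/
def IsExtremePM {Ω : Type*} [MeasurableSpace Ω] (S : Set (ProbabilityMeasure Ω))
    (μ : ProbabilityMeasure Ω) : Prop :=
  μ ∈ S ∧ ∀ μ₁ ∈ S, ∀ μ₂ ∈ S, ∀ t : ℝ, 0 < t → t < 1 →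
    (μ : Measure Ω) = ENNReal.ofReal t • (μ₁ : Measure Ω) +
      ENNReal.ofReal (1 - t) • (μ₂ : Measure Ω) → μ₁ = μ₂

/-- the class `Ω_w(A*, p)` -/
def OmegaW {A : Type} [Fintype A] (p : ℕ) (f : List A → ℝ) : Prop :=
  (∀ I, 0 ≤ f I ∧ f I ≤ 1) ∧
  ∃ c > (0:ℝ),
    (∀ n : ℕ, ∑ w : Fin n → A, f (List.ofFn w) = 1) ∧
    (∀ I J : List A, ∃ K : List A, K.length ≤ p ∧ c * (f I * f J) ≤ f (I ++ K ++ J)) ∧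
    (∀ I : List A, ∃ i j : A, c * f I ≤ f (i :: I) ∧ c * f I ≤ f (I ++ [j]))

/-- the class `Ω(A*, p)` -/
def OmegaS {A : Type} [Fintype A] (p : ℕ) (f : List A → ℝ) : Prop :=
  (∀ I, 0 ≤ f I ∧ f I ≤ 1) ∧
  ∃ c > (0:ℝ),
    (∀ n : ℕ, ∑ w : Fin n → A, f (List.ofFn w) = 1) ∧
    (∀ I J : List A, ∃ K : List A, K.length = p ∧ c * (f I * f J) ≤ f (I ++ K ++ J))

/-- `f_{m,n}(I)` -/
def fmn {A : Type} [Fintype A] (f : List A → ℝ) (m n : ℕ) (I : List A) : ℝ :=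
  ∑ u : Fin m → A, ∑ v : Fin n → A, f (List.ofFn u ++ I ++ List.ofFn v)

/-- `f*(I) = sup_{m,n} f_{m,n}(I)` -/
def fstar {A : Type} [Fintype A] (f : List A → ℝ) (I : List A) : ℝ :=
  ⨆ m : ℕ, ⨆ n : ℕ, fmn f m n I

/-- the class `D_w(X, p)` -/
def Dw {A : Type} (X : Set (ℕ → A)) (p : ℕ) (φ : List A → ℝ) : Prop :=
  (∀ I, Lang X I → 0 ≤ φ I) ∧ (∃ I, Lang X I ∧ I ≠ [] ∧ 0 < φ I) ∧
  ∃ c : ℝ, 0 < c ∧ c ≤ 1 ∧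
    (∀ I J : List A, Lang X (I ++ J) → φ (I ++ J) ≤ c⁻¹ * φ I * φ J) ∧
    (∀ I J : List A, Lang X I → Lang X J →
      ∃ K : List A, K.length ≤ p ∧ Lang X (I ++ K ++ J) ∧
        c * (φ I * φ J) ≤ φ (I ++ K ++ J))

/-- the class `D(X, p)` -/
def Ds {A : Type} (X : Set (ℕ → A)) (p : ℕ) (φ : List A → ℝ) : Prop :=
  (∀ I, Lang X I → 0 ≤ φ I) ∧ (∃ I, Lang X I ∧ I ≠ [] ∧ 0 < φ I) ∧
  ∃ c : ℝ, 0 < c ∧ c ≤ 1 ∧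
    (∀ I J : List A, Lang X (I ++ J) → φ (I ++ J) ≤ c⁻¹ * φ I * φ J) ∧
    (∀ I J : List A, Lang X I → Lang X J →
      ∃ K : List A, K.length = p ∧ Lang X (I ++ K ++ J) ∧
        c * (φ I * φ J) ≤ φ (I ++ K ++ J))

end

noncomputable section

/-- iterated one-block maps along a chain of alphabets: `tauFrom π j i : B j → B (j+i)` -/
def tauFrom {B : ℕ → Type} (π : ∀ i, B i → B (i+1)) (j : ℕ) : (i : ℕ) → B j → B (j + i)
  | 0 => id
  | (i+1) => fun a => π (j + i) (tauFrom π j i a)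

/-- weighted pressure value along a chain starting at index `j`, with `k` weights `w 0, …, w (k-1)` -/
def wValGen {B : ℕ → Type} [∀ i, Fintype (B i)] [∀ i, MeasurableSpace (B i)]
    (π : ∀ i, B i → B (i+1)) (X : ∀ i, Set (ℕ → B i)) (j k : ℕ) (w : ℕ → ℝ)
    (φ : ℕ → (ℕ → B j) → ℝ) (μ : ProbabilityMeasure (ℕ → B j)) : EReal :=
  PhiStar (μ : Measure (ℕ → B j)) φ +
    ((∑ i ∈ Finset.range k, w i *
      ent (X (j + i)) ((μ : Measure (ℕ → B j)).map (blockMap (tauFrom π j i))) : ℝ) : EReal)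

/-- weighted equilibrium states along a chain -/
def wEqSetGen {B : ℕ → Type} [∀ i, Fintype (B i)] [∀ i, MeasurableSpace (B i)]
    (π : ∀ i, B i → B (i+1)) (X : ∀ i, Set (ℕ → B i)) (j k : ℕ) (w : ℕ → ℝ)
    (φ : ℕ → (ℕ → B j) → ℝ) : Set (ProbabilityMeasure (ℕ → B j)) :=
  {μ | μ ∈ MInv (X j) ∧
    wValGen π X j k w φ μ = ⨆ η ∈ MInv (X j), wValGen π X j k w φ η}

end

/-! If `η` charges a `μ`-null set, it charges a closed one `K`. The sets of `n`-words beginning a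
point of `K` cut out neighbourhoods of `K` that decrease to `K`, so their `μ`-mass tends to `0`
while their `η`-mass stays at least `η K > 0`. Apply `p log q - p log p ≤ q / t + p log t`
(from `log x ≤ x - 1`) to each word, with `t = ε` on these words and `t = 1` elsewhere: the sum is
eventually at most `η K * log ε` plus a constant, and `ε > 0` is arbitrary. -/

section FiniteDistributions

variable {ι : Type*}

/-- The relative entropy of `q` with respect to `p` with the sign making it `∑ p log (q / p)`, i.e.
minus the Kullback–Leibler divergence, extended-valued because `q` may vanish where `p` does not. -/
noncomputable def negRelEntropy [Fintype ι] (p q : ι → ℝ) : EReal :=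
  ∑ i, ((p i : EReal) * elog (q i) - ((p i * Real.log (p i) : ℝ) : EReal))

lemma coe_mul_elog_sub_le {p q t : ℝ} (hp : 0 ≤ p) (hq : 0 ≤ q) (ht : 0 < t) :
    (p : EReal) * elog q - ((p * Real.log p : ℝ) : EReal) ≤
      ((q / t + p * Real.log t : ℝ) : EReal) := by
  rcases hp.eq_or_lt with rfl | hp
  · have : 0 ≤ q / t := by positivity
    simpa using mod_cast this
  rcases hq.eq_or_lt with rfl | hq
  · simp [elog, EReal.coe_mul_bot_of_pos hp]
  rw [elog, if_neg hq.not_ge]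
  norm_cast
  have hlog := Real.log_le_sub_one_of_pos (show 0 < q / (p * t) by positivity)
  rw [Real.log_div hq.ne' (by positivity), Real.log_mul hp.ne' ht.ne'] at hlog
  have hscale : p * (q / (p * t) - 1) = q / t - p := by field_simp
  linarith [mul_le_mul_of_nonneg_left hlog hp.le]

lemma ereal_coe_finset_sum (s : Finset ι) (f : ι → ℝ) :
    ((∑ i ∈ s, f i : ℝ) : EReal) = ∑ i ∈ s, (f i : EReal) :=
  map_sum (⟨⟨Real.toEReal, EReal.coe_zero⟩, EReal.coe_add⟩ : ℝ →+ EReal) f s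

lemma negRelEntropy_le_sum [Fintype ι] {p q t : ι → ℝ} (hp : 0 ≤ p) (hq : 0 ≤ q)
    (ht : ∀ i, 0 < t i) :
    negRelEntropy p q ≤ ((∑ i, (q i / t i + p i * Real.log (t i)) : ℝ) : EReal) := by
  rw [ereal_coe_finset_sum]
  exact Finset.sum_le_sum fun i _ => coe_mul_elog_sub_le (hp i) (hq i) (ht i)

lemma negRelEntropy_le_of_finset [Fintype ι] {p q : ι → ℝ} (hp : 0 ≤ p) (hq : 0 ≤ q)
    (s : Finset ι) {ε : ℝ} (hε : 0 < ε) :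
    negRelEntropy p q ≤
      (((∑ i ∈ s, q i) / ε + ∑ i, q i + (∑ i ∈ s, p i) * Real.log ε : ℝ) : EReal) := by
  let t : ι → ℝ := fun i => if i ∈ s then ε else 1
  have ht : ∀ i, 0 < t i := fun i => by simp only [t]; split_ifs <;> positivity
  refine (negRelEntropy_le_sum hp hq ht).trans (EReal.coe_le_coe_iff.2 ?_)
  have h_mem : ∑ i ∈ s, (q i / t i + p i * Real.log (t i)) =
      (∑ i ∈ s, q i) / ε + (∑ i ∈ s, p i) * Real.log ε := by
    rw [Finset.sum_div, Finset.sum_mul, ← Finset.sum_add_distrib]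
    exact Finset.sum_congr rfl fun i hi => by simp only [t, if_pos hi]
  have h_compl : ∑ i ∈ sᶜ, (q i / t i + p i * Real.log (t i)) = ∑ i ∈ sᶜ, q i :=
    Finset.sum_congr rfl fun i hi => by simp [t, Finset.mem_compl.1 hi]
  have h_le : ∑ i ∈ sᶜ, q i ≤ ∑ i, q i :=
    Finset.sum_le_univ_sum_of_nonneg hq
  rw [← Finset.sum_add_sum_compl s, h_mem, h_compl]
  linarith

lemma tendsto_negRelEntropy_bot {α : Type*} {κ : α → Type*} [∀ a, Fintype (κ a)] {l : Filter α}
    {p q : ∀ a, κ a → ℝ} (hp : ∀ a, 0 ≤ p a) (hq : ∀ a, 0 ≤ q a) {Q : ℝ}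
    (hQ : ∀ a, ∑ i, q a i ≤ Q) (s : ∀ a, Finset (κ a)) {c : ℝ} (hc : 0 < c)
    (hps : ∀ a, c ≤ ∑ i ∈ s a, p a i)
    (hqs : Tendsto (fun a => ∑ i ∈ s a, q a i) l (𝓝 0)) :
    Tendsto (fun a => negRelEntropy (p a) (q a)) l (𝓝 ⊥) := by
  rw [EReal.tendsto_nhds_bot_iff_real]
  intro M
  obtain ⟨ε, hεM, hε1, hε0⟩ :
      ∃ ε : ℝ, 1 + Q + c * Real.log ε < M ∧ ε < 1 ∧ 0 < ε := by
    have hbot : Tendsto (fun ε => 1 + Q + c * Real.log ε) (𝓝[>] 0) atBot :=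
      tendsto_atBot_add_const_left _ _ (Real.tendsto_log_nhdsGT_zero.const_mul_atBot hc)
    exact ((hbot.eventually_lt_atBot M).and
      ((eventually_lt_nhds one_pos).filter_mono nhdsWithin_le_nhds |>.and
        self_mem_nhdsWithin)).exists
  filter_upwards [hqs.eventually_le_const hε0] with a ha
  refine (negRelEntropy_le_of_finset (hp a) (hq a) (s a) hε0).trans_lt
    (EReal.coe_lt_coe_iff.2 (lt_of_le_of_lt ?_ hεM))
  have hqε : (∑ i ∈ s a, q a i) / ε ≤ 1 := (div_le_one hε0).2 ha
  have hpε : (∑ i ∈ s a, p a i) * Real.log ε ≤ c * Real.log ε :=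
    mul_le_mul_of_nonpos_right (hps a) (Real.log_neg hε0 hε1).le
  linarith [hQ a]

end FiniteDistributions

lemma exists_isClosed_null_pos_of_not_absolutelyContinuous {Ω : Type*} [TopologicalSpace Ω]
    [MeasurableSpace Ω] {η μ : Measure Ω} [IsFiniteMeasure η] [η.WeaklyRegular]
    (hac : ¬ η ≪ μ) : ∃ K, IsClosed K ∧ μ K = 0 ∧ 0 < η K := by
  obtain ⟨E, hE, hμE, hηE⟩ : ∃ E, MeasurableSet E ∧ μ E = 0 ∧ η E ≠ 0 := by
    by_contra! h
    exact hac (Measure.AbsolutelyContinuous.mk h)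
  obtain ⟨K, hKE, hK, hηK⟩ :=
    hE.exists_lt_isClosed_of_ne_top (measure_ne_top η E) (pos_iff_ne_zero.2 hηE)
  exact ⟨K, hK, measure_mono_null hKE hμE, hηK⟩

section InitialWords

variable {A : Type*}

/-- The initial word of length `n` of a sequence, as a function on `Fin n` so that it takes values
in a finite type; `wordOf` is the corresponding list. -/
def initialWord (n : ℕ) (x : ℕ → A) : Fin n → A := fun i => x i

lemma antitone_preimage_image_initialWord (K : Set (ℕ → A)) :
    Antitone fun n => initialWord n ⁻¹' (initialWord n '' K) := by
  rintro m n hmn x ⟨y, hy, hyx⟩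
  exact ⟨y, hy, funext fun i => congrFun hyx (i.castLE hmn)⟩

lemma iInter_preimage_image_initialWord [TopologicalSpace A] {K : Set (ℕ → A)}
    (hK : IsClosed K) : ⋂ n, initialWord n ⁻¹' (initialWord n '' K) = K := by
  refine Set.Subset.antisymm (fun x hx => ?_)
    (Set.subset_iInter fun n => Set.subset_preimage_image _ _)
  choose y hyK hyx using Set.mem_iInter.1 hx
  have hlim : Tendsto y atTop (𝓝 x) := by
    refine tendsto_pi_nhds.2 fun i => tendsto_const_nhds.congr' ?_
    filter_upwards [eventually_gt_atTop i] with n hn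
    exact (congrFun (hyx n) ⟨i, hn⟩).symm
  exact hK.mem_of_tendsto hlim (Eventually.of_forall hyK)

variable [MeasurableSpace A]

lemma measurable_initialWord (n : ℕ) : Measurable (initialWord n : (ℕ → A) → Fin n → A) :=
  measurable_pi_lambda _ fun i => measurable_pi_apply (i : ℕ)

variable [MeasurableSingletonClass A]

lemma tendsto_measureReal_preimage_image_initialWord [Finite A] [TopologicalSpace A]
    (μ : Measure (ℕ → A)) [IsFiniteMeasure μ] {K : Set (ℕ → A)} (hK : IsClosed K) :
    Tendsto (fun n => μ.real (initialWord n ⁻¹' (initialWord n '' K))) atTop (𝓝 (μ.real K)) := by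
  have hmeas : ∀ n, NullMeasurableSet (initialWord n ⁻¹' (initialWord n '' K)) μ := fun n =>
    (measurable_initialWord n (Set.toFinite _).measurableSet).nullMeasurableSet
  have hlim := tendsto_measure_iInter_atTop hmeas (antitone_preimage_image_initialWord K)
    ⟨0, measure_ne_top _ _⟩
  rw [iInter_preimage_image_initialWord hK] at hlim
  exact (ENNReal.tendsto_toReal (measure_ne_top μ K)).comp hlim

lemma sum_measureReal_preimage_initialWord (μ : Measure (ℕ → A)) [IsFiniteMeasure μ] {n : ℕ}
    (s : Finset (Fin n → A)) :
    ∑ w ∈ s, μ.real (initialWord n ⁻¹' {w}) = μ.real (initialWord n ⁻¹' s) :=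
  sum_measureReal_preimage_singleton s fun w _ =>
    measurable_initialWord n (measurableSet_singleton w)

end InitialWords

lemma cyl_ofFn {A : Type} {n : ℕ} (w : Fin n → A) :
    cyl (List.ofFn w) = initialWord n ⁻¹' {w} := by
  ext x
  simp [cyl, initialWord, funext_iff, Fin.forall_iff]

lemma mw_ofFn {A : Type} [MeasurableSpace A] [MeasurableSingletonClass A] (X : Set (ℕ → A))
    (μ : Measure (ℕ → A)) {n : ℕ} (w : Fin n → A) :
    mw X μ (List.ofFn w) = (μ.restrict X).real (initialWord n ⁻¹' {w}) := by
  rw [mw, cyl_ofFn, measureReal_restrict_apply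
    (measurable_initialWord n (measurableSet_singleton w)), measureReal_def]

lemma tendsto_negRelEntropy_initialWord {A : Type*} [Fintype A] [TopologicalSpace A]
    [DiscreteTopology A] [MeasurableSpace A] [BorelSpace A] {η μ : Measure (ℕ → A)}
    [IsFiniteMeasure η] [IsFiniteMeasure μ] (hac : ¬ η ≪ μ) :
    Tendsto (fun n => negRelEntropy (fun w => η.real (initialWord n ⁻¹' {w}))
      (fun w => μ.real (initialWord n ⁻¹' {w}))) atTop (𝓝 ⊥) := by
  obtain ⟨K, hK, hμK, hηK⟩ := exists_isClosed_null_pos_of_not_absolutelyContinuous hac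
  refine tendsto_negRelEntropy_bot (Q := μ.real Set.univ) (c := η.real K)
    (fun n w => measureReal_nonneg) (fun n w => measureReal_nonneg) (fun n => ?_)
    (fun n => (initialWord n '' K).toFinset) (ENNReal.toReal_pos hηK.ne' (measure_ne_top η K))
    (fun n => ?_) ?_
  · exact (sum_measureReal_preimage_initialWord μ Finset.univ).trans_le
      (measureReal_mono (Set.subset_univ _))
  · rw [sum_measureReal_preimage_initialWord, Set.coe_toFinset]
    exact measureReal_mono (Set.subset_preimage_image _ _)
  · simp only [sum_measureReal_preimage_initialWord, Set.coe_toFinset]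
    simpa [measureReal_def, hμK] using tendsto_measureReal_preimage_image_initialWord μ hK

theorem weighted_eq_states_stmt_14_general {A : Type} [Fintype A] [TopologicalSpace A]
    [DiscreteTopology A] [MeasurableSpace A] [BorelSpace A] (X : Set (ℕ → A))
    (η μ : Measure (ℕ → A)) [IsFiniteMeasure η] [IsFiniteMeasure μ]
    (hac : ¬ η.restrict X ≪ μ.restrict X) :
    Tendsto (fun n : ℕ => ∑ w : Fin n → A,
        (((mw X η (List.ofFn w) : ℝ) : EReal) * elog (mw X μ (List.ofFn w)) -
          ((mw X η (List.ofFn w) * Real.log (mw X η (List.ofFn w)) : ℝ) : EReal)))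
      atTop (𝓝 ⊥) := by
  simp only [mw_ofFn]
  exact tendsto_negRelEntropy_initialWord hac

lemma InvOn.restrict_eq_self {A : Type} [MeasurableSpace A] {X : Set (ℕ → A)}
    {μ : Measure (ℕ → A)} (hμ : InvOn X μ) (hX : MeasurableSet X) : μ.restrict X = μ := by
  obtain ⟨_, -, hμX⟩ := hμ
  exact Measure.restrict_eq_self_of_ae_mem ((mem_ae_iff_prob_eq_one hX).2 hμX)

/-- Lemma 5.4 / `lem-4.1`: if `η` is not absolutely continuous with respect to
`μ` (both shift-invariant probability measures on `X`), then
`Σ_{I ∈ L_n(X)} (η(I) log μ(I) − η(I) log η(I)) → −∞`. -/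
theorem weighted_eq_states_stmt_14 {A : Type} [Fintype A] [TopologicalSpace A]
    [DiscreteTopology A] [MeasurableSpace A] [BorelSpace A]
    (X : Set (ℕ → A)) (hX : IsSubshift X)
    (η μ : Measure (ℕ → A)) (hη : InvOn X η) (hμ : InvOn X μ)
    (hac : ¬ η ≪ μ) :
    Tendsto (fun n : ℕ => ∑ w : Fin n → A,
        (((mw X η (List.ofFn w) : ℝ) : EReal) * elog (mw X μ (List.ofFn w)) -
          ((mw X η (List.ofFn w) * Real.log (mw X η (List.ofFn w)) : ℝ) : EReal)))
      atTop (nhds (⊥ : EReal)) := by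
  have hXm : MeasurableSet X := hX.2.1.isClosed.measurableSet
  have := hη.1
  have := hμ.1
  refine weighted_eq_states_stmt_14_general X η μ ?_
  rwa [hη.restrict_eq_self hXm, hμ.restrict_eq_self hXm]
end

section
/- Let (X, σ_X) and (Y, σ_Y) be one-sided subshifts over finite alphabets A and A′, with Y a factor of X via a one-block factor map π : X → Y. Let p ∈ ℕ, a > 0, and φ ∈ D_w(X, p). Define φ^a : L(X) → [0,∞) by φ^a(I) = φ(I)^a, and ψ : L(Y) → [0,∞) by ψ(J) = Σ_{I ∈ L(X), |I| = |J|, πI = J} φ(I). Then φ^a ∈ D_w(X, p) and ψ ∈ D_w(Y, p). Furthermore, if φ ∈ D(X, p), then φ^a ∈ D(X, p) and ψ ∈ D(Y, p). -/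
open MeasureTheory Filter Topology
open scoped Classical ENNReal NNReal

/-!
Raising `φ` to the power `a` replaces the constant `c` by `c ^ a`. For `ψ`, extend `φ` by zero to
all words. Since the words over `IJ` are the concatenations of a word over `I` and one over `J`,
summing the upper bound on `φ` gives the upper bound on `ψ` with the same constant. For the lower
bound, `c φ(I') φ(J')` is at most the sum of `φ(I'KJ')` over all admissible linking words `K`, and
summing over `I'` and `J'` gives `c ψ(I) ψ(J) ≤ ∑ K, ψ(I π(K) J)`. The number of such `K` is bounded
independently of `I` and `J`, so one of the terms is at least a fixed proportion of `c ψ(I) ψ(J)`.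
-/

section Language

variable {A B : Type} {X : Set (ℕ → A)} {I J : List A}

theorem lang_iff_exists_wordOf : Lang X I ↔ ∃ x ∈ X, wordOf x I.length = I := by
  have wordOf_eq_iff (x : ℕ → A) : wordOf x I.length = I ↔ x ∈ cyl I := by
    simp [wordOf, cyl, List.ext_get_iff, Fin.forall_iff]
  simp only [Lang, Set.Nonempty, Set.mem_inter_iff, wordOf_eq_iff, and_comm]

theorem iterate_shiftMap_apply (x : ℕ → A) (m n : ℕ) : shiftMap^[m] x n = x (m + n) := by
  induction m generalizing x with
  | zero => simp
  | succ m ih => rw [Function.iterate_succ_apply, ih, shiftMap, Nat.add_right_comm]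

theorem wordOf_add (x : ℕ → A) (m n : ℕ) :
    wordOf x (m + n) = wordOf x m ++ wordOf (shiftMap^[m] x) n := by
  simp only [wordOf, List.ofFn_add, iterate_shiftMap_apply, Fin.val_castLE, Fin.val_natAdd]

theorem map_wordOf (π : A → B) (x : ℕ → A) (n : ℕ) :
    (wordOf x n).map π = wordOf (blockMap π x) n :=
  List.map_ofFn ..

theorem wordOf_eq_and_eq_of_eq_append {x : ℕ → A} (h : wordOf x (I ++ J).length = I ++ J) :
    wordOf x I.length = I ∧ wordOf (shiftMap^[I.length] x) J.length = J := by
  rw [List.length_append, wordOf_add] at h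
  exact List.append_inj h (by simp only [wordOf, List.length_ofFn])

theorem Lang.of_append_left (h : Lang X (I ++ J)) : Lang X I := by
  obtain ⟨x, hx, hIJ⟩ := lang_iff_exists_wordOf.1 h
  exact lang_iff_exists_wordOf.2 ⟨x, hx, (wordOf_eq_and_eq_of_eq_append hIJ).1⟩

theorem Lang.of_append_right (hX : Set.MapsTo shiftMap X X) (h : Lang X (I ++ J)) :
    Lang X J := by
  obtain ⟨x, hx, hIJ⟩ := lang_iff_exists_wordOf.1 h
  exact lang_iff_exists_wordOf.2 ⟨_, hX.iterate _ hx, (wordOf_eq_and_eq_of_eq_append hIJ).2⟩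

theorem lang_image_iff {π : A → B} {J : List B} :
    Lang (blockMap π '' X) J ↔ ∃ I, Lang X I ∧ I.map π = J := by
  simp only [lang_iff_exists_wordOf, Set.exists_mem_image, ← map_wordOf]
  constructor
  · rintro ⟨x, hx, hJ⟩
    exact ⟨wordOf x J.length, ⟨x, hx, by simp [wordOf]⟩, hJ⟩
  · rintro ⟨I, ⟨x, hx, hI⟩, rfl⟩
    exact ⟨x, hx, by rw [List.length_map, hI]⟩

theorem Lang.map (π : A → B) (h : Lang X I) : Lang (blockMap π '' X) (I.map π) :=
  lang_image_iff.2 ⟨I, h, rfl⟩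

end Language

section QuasiMultiplicative

variable {A : Type} {X : Set (ℕ → A)} {N : Set ℕ} {c c' a : ℝ} {φ : List A → ℝ}

/-- Submultiplicativity of `φ` on the language of `X` up to the factor `c⁻¹`, condition (1) in the
definition of `D_w(X, p)` and `D(X, p)`. -/
def AlmostSubmult (X : Set (ℕ → A)) (c : ℝ) (φ : List A → ℝ) : Prop :=
  ∀ I J : List A, Lang X (I ++ J) → φ (I ++ J) ≤ c⁻¹ * φ I * φ J

/-- Supermultiplicativity of `φ` on the language of `X` up to the factor `c` and the insertion of a
linking word, condition (2) in the definition of `D_w(X, p)` and `D(X, p)`. The lengths allowed for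
the linking word form the set `N`, so that both classes are instances. -/
def LinkSupermult (X : Set (ℕ → A)) (N : Set ℕ) (c : ℝ) (φ : List A → ℝ) : Prop :=
  ∀ I J : List A, Lang X I → Lang X J →
    ∃ K : List A, K.length ∈ N ∧ Lang X (I ++ K ++ J) ∧ c * (φ I * φ J) ≤ φ (I ++ K ++ J)

/-- The common form of `D_w(X, p)`, where `N = Set.Iic p`, and `D(X, p)`, where `N = {p}`. -/
def QuasiMult (X : Set (ℕ → A)) (N : Set ℕ) (φ : List A → ℝ) : Prop :=
  (∀ I, Lang X I → 0 ≤ φ I) ∧ (∃ I, Lang X I ∧ I ≠ [] ∧ 0 < φ I) ∧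
    ∃ c : ℝ, 0 < c ∧ c ≤ 1 ∧ AlmostSubmult X c φ ∧ LinkSupermult X N c φ

theorem quasiMult_Iic_iff {p : ℕ} : QuasiMult X (Set.Iic p) φ ↔ Dw X p φ := Iff.rfl

theorem quasiMult_singleton_iff {p : ℕ} : QuasiMult X {p} φ ↔ Ds X p φ := Iff.rfl

theorem AlmostSubmult.anti (hX : Set.MapsTo shiftMap X X) (hφ : ∀ I, Lang X I → 0 ≤ φ I)
    (h : AlmostSubmult X c φ) (hc' : 0 < c') (hcc' : c' ≤ c) : AlmostSubmult X c' φ := by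
  intro I J hIJ
  have hI := hφ I hIJ.of_append_left
  have hJ := hφ J (hIJ.of_append_right hX)
  exact (h I J hIJ).trans (by gcongr)

theorem AlmostSubmult.rpow (hX : Set.MapsTo shiftMap X X) (hφ : ∀ I, Lang X I → 0 ≤ φ I)
    (h : AlmostSubmult X c φ) (hc : 0 ≤ c) (ha : 0 ≤ a) :
    AlmostSubmult X (c ^ a) (fun I => φ I ^ a) := by
  intro I J hIJ
  have hI := hφ I hIJ.of_append_left
  have hJ := hφ J (hIJ.of_append_right hX)
  calc φ (I ++ J) ^ a ≤ (c⁻¹ * φ I * φ J) ^ a := Real.rpow_le_rpow (hφ _ hIJ) (h I J hIJ) ha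
    _ = (c ^ a)⁻¹ * φ I ^ a * φ J ^ a := by
      rw [Real.mul_rpow (by positivity) hJ, Real.mul_rpow (by positivity) hI, Real.inv_rpow hc]

theorem LinkSupermult.rpow (hφ : ∀ I, Lang X I → 0 ≤ φ I) (h : LinkSupermult X N c φ)
    (hc : 0 ≤ c) (ha : 0 ≤ a) : LinkSupermult X N (c ^ a) (fun I => φ I ^ a) := by
  intro I J hI hJ
  obtain ⟨K, hK, hIKJ, hle⟩ := h I J hI hJ
  have hφI := hφ I hI
  have hφJ := hφ J hJ
  refine ⟨K, hK, hIKJ, ?_⟩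
  calc c ^ a * (φ I ^ a * φ J ^ a) = (c * (φ I * φ J)) ^ a := by
        rw [Real.mul_rpow hc (by positivity), Real.mul_rpow hφI hφJ]
    _ ≤ φ (I ++ K ++ J) ^ a := Real.rpow_le_rpow (by positivity) hle ha

theorem QuasiMult.rpow (hX : Set.MapsTo shiftMap X X) (h : QuasiMult X N φ) (ha : 0 ≤ a) :
    QuasiMult X N (fun I => φ I ^ a) := by
  obtain ⟨hφ, ⟨I, hI, hne, hpos⟩, c, hc, hc1, hsub, hsuper⟩ := h
  exact ⟨fun I hI => Real.rpow_nonneg (hφ I hI) a, ⟨I, hI, hne, Real.rpow_pos_of_pos hpos a⟩,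
    c ^ a, Real.rpow_pos_of_pos hc a, Real.rpow_le_one hc.le hc1 ha,
    hsub.rpow hX hφ hc.le ha, hsuper.rpow hφ hc.le ha⟩

end QuasiMultiplicative

section WordFiber

variable {A B : Type*} [Fintype A] {π : A → B}

/-- The words over `A`, whether or not they belong to a given language, that the one-block map `π`
sends to `J`. -/
noncomputable def wordFiber (π : A → B) (J : List B) : Finset (List A) :=
  {I ∈ (Finset.univ : Finset (Fin J.length → A)).image List.ofFn | I.map π = J}

theorem mem_wordFiber {J : List B} {I : List A} : I ∈ wordFiber π J ↔ I.map π = J := by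
  simp only [wordFiber, Finset.mem_filter, Finset.mem_image, Finset.mem_univ, true_and,
    and_iff_right_iff_imp]
  rintro rfl
  rw [List.length_map]
  exact ⟨I.get, List.ofFn_get I⟩

theorem sum_wordFiber_append {M : Type*} [AddCommMonoid M] (f : List A → M) (I J : List B) :
    ∑ W ∈ wordFiber π (I ++ J), f W =
      ∑ I' ∈ wordFiber π I, ∑ J' ∈ wordFiber π J, f (I' ++ J') := by
  rw [← Finset.sum_product']
  refine Finset.sum_nbij' (fun W => (W.take I.length, W.drop I.length)) (fun x => x.1 ++ x.2)
    ?_ ?_ ?_ ?_ ?_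
  · intro W hW
    simp [mem_wordFiber, List.map_take, List.map_drop, mem_wordFiber.1 hW]
  · rintro ⟨I', J'⟩ h
    simp only [Finset.mem_product, mem_wordFiber] at h
    simp [mem_wordFiber, h]
  · simp
  · rintro ⟨I', J'⟩ h
    simp only [Finset.mem_product, mem_wordFiber] at h
    simp [← h.1]
  · simp

end WordFiber

section ZeroExtension

variable {A : Type} {X : Set (ℕ → A)} {N : Set ℕ} {c : ℝ} {φ : List A → ℝ}

/-- The extension of `φ` by zero outside the language of `X`. Conditions on words of `X` become
inequalities between values at arbitrary words, which can be summed over whole fibers of `π`. -/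
noncomputable def zeroExt (X : Set (ℕ → A)) (φ : List A → ℝ) (I : List A) : ℝ :=
  if Lang X I then φ I else 0

theorem zeroExt_nonneg (hφ : ∀ I, Lang X I → 0 ≤ φ I) (I : List A) : 0 ≤ zeroExt X φ I := by
  unfold zeroExt
  split_ifs with hI
  exacts [hφ I hI, le_rfl]

theorem AlmostSubmult.zeroExt_append_le (hX : Set.MapsTo shiftMap X X)
    (hφ : ∀ I, Lang X I → 0 ≤ φ I) (h : AlmostSubmult X c φ) (hc : 0 ≤ c) (I J : List A) :
    zeroExt X φ (I ++ J) ≤ c⁻¹ * zeroExt X φ I * zeroExt X φ J := by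
  by_cases hIJ : Lang X (I ++ J)
  · simpa only [zeroExt, hIJ, hIJ.of_append_left, hIJ.of_append_right hX, if_true] using h I J hIJ
  · have hI := zeroExt_nonneg hφ I
    have hJ := zeroExt_nonneg hφ J
    rw [zeroExt, if_neg hIJ]
    positivity

theorem LinkSupermult.mul_zeroExt_le_sum (hφ : ∀ I, Lang X I → 0 ≤ φ I)
    (h : LinkSupermult X N c φ) {I J : List A} {S : Finset (List A)}
    (hS : ∀ K : List A, K.length ∈ N → Lang X (I ++ K ++ J) → K ∈ S) :
    c * (zeroExt X φ I * zeroExt X φ J) ≤ ∑ K ∈ S, zeroExt X φ (I ++ K ++ J) := by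
  have hsum : ∀ K ∈ S, 0 ≤ zeroExt X φ (I ++ K ++ J) := fun K _ => zeroExt_nonneg hφ _
  by_cases hIJ : Lang X I ∧ Lang X J
  · obtain ⟨K, hK, hIKJ, hle⟩ := h I J hIJ.1 hIJ.2
    calc c * (zeroExt X φ I * zeroExt X φ J) ≤ zeroExt X φ (I ++ K ++ J) := by
          simpa only [zeroExt, hIJ, hIKJ, if_true] using hle
      _ ≤ _ := Finset.single_le_sum hsum (hS K hK hIKJ)
  · have hzero : zeroExt X φ I * zeroExt X φ J = 0 := by
      rcases not_and_or.1 hIJ with hI | hJ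
      · rw [zeroExt, if_neg hI, zero_mul]
      · rw [zeroExt.eq_def X φ J, if_neg hJ, mul_zero]
    rw [hzero, mul_zero]
    exact Finset.sum_nonneg hsum

end ZeroExtension

section Projection

variable {A B : Type} [Fintype A] {X : Set (ℕ → A)} {π : A → B} {N : Set ℕ} {c : ℝ}
  {φ : List A → ℝ}

theorem psiProj_eq_sum_zeroExt (J : List B) :
    psiProj X π φ J = ∑ I ∈ wordFiber π J, zeroExt X φ I := by
  rw [wordFiber, Finset.sum_filter, Finset.sum_image List.ofFn_injective.injOn]
  simp only [psiProj, zeroExt, ← ite_and, and_comm]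

theorem psiProj_nonneg (hφ : ∀ I, Lang X I → 0 ≤ φ I) (J : List B) : 0 ≤ psiProj X π φ J := by
  rw [psiProj_eq_sum_zeroExt]
  exact Finset.sum_nonneg fun I _ => zeroExt_nonneg hφ I

theorem le_psiProj_map (hφ : ∀ I, Lang X I → 0 ≤ φ I) {I : List A} (hI : Lang X I) :
    φ I ≤ psiProj X π φ (I.map π) := by
  calc φ I = zeroExt X φ I := (if_pos hI).symm
    _ ≤ ∑ I' ∈ wordFiber π (I.map π), zeroExt X φ I' :=
      Finset.single_le_sum (fun I' _ => zeroExt_nonneg hφ I') (mem_wordFiber.2 rfl)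
    _ = psiProj X π φ (I.map π) := (psiProj_eq_sum_zeroExt _).symm

protected theorem AlmostSubmult.psiProj (hX : Set.MapsTo shiftMap X X)
    (hφ : ∀ I, Lang X I → 0 ≤ φ I) (h : AlmostSubmult X c φ) (hc : 0 ≤ c) :
    AlmostSubmult (blockMap π '' X) c (psiProj X π φ) := by
  intro I J _
  simp only [psiProj_eq_sum_zeroExt, sum_wordFiber_append]
  rw [Finset.mul_sum (wordFiber π I), Finset.sum_mul_sum]
  exact Finset.sum_le_sum fun I' _ => Finset.sum_le_sum fun J' _ =>
    h.zeroExt_append_le hX hφ hc I' J'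

theorem sum_zeroExt_linked_le_psiProj (hφ : ∀ I, Lang X I → 0 ≤ φ I) (I J : List B)
    (K : List A) :
    ∑ I' ∈ wordFiber π I, ∑ J' ∈ wordFiber π J, zeroExt X φ (I' ++ K ++ J') ≤
      psiProj X π φ (I ++ K.map π ++ J) := by
  simp only [psiProj_eq_sum_zeroExt, sum_wordFiber_append]
  refine Finset.sum_le_sum fun I' _ => ?_
  exact Finset.single_le_sum
    (f := fun K' => ∑ J' ∈ wordFiber π J, zeroExt X φ (I' ++ K' ++ J'))
    (fun K' _ => Finset.sum_nonneg fun J' _ => zeroExt_nonneg hφ _) (mem_wordFiber.2 rfl)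

theorem LinkSupermult.mul_psiProj_le_sum (hφ : ∀ I, Lang X I → 0 ≤ φ I)
    (h : LinkSupermult X N c φ) {I J : List B} {S : Finset (List A)}
    (hS : ∀ K : List A, K.length ∈ N → Lang (blockMap π '' X) (I ++ K.map π ++ J) → K ∈ S) :
    c * (psiProj X π φ I * psiProj X π φ J) ≤ ∑ K ∈ S, psiProj X π φ (I ++ K.map π ++ J) := by
  have hlink : ∀ I' ∈ wordFiber π I, ∀ J' ∈ wordFiber π J,
      c * (zeroExt X φ I' * zeroExt X φ J') ≤ ∑ K ∈ S, zeroExt X φ (I' ++ K ++ J') := by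
    intro I' hI' J' hJ'
    refine h.mul_zeroExt_le_sum hφ fun K hK hIKJ => hS K hK ?_
    simpa only [List.map_append, mem_wordFiber.1 hI', mem_wordFiber.1 hJ'] using hIKJ.map π
  calc c * (psiProj X π φ I * psiProj X π φ J)
      = ∑ I' ∈ wordFiber π I, ∑ J' ∈ wordFiber π J, c * (zeroExt X φ I' * zeroExt X φ J') := by
        rw [psiProj_eq_sum_zeroExt, psiProj_eq_sum_zeroExt, Finset.sum_mul_sum]
        simp only [Finset.mul_sum]
    _ ≤ ∑ I' ∈ wordFiber π I, ∑ J' ∈ wordFiber π J, ∑ K ∈ S, zeroExt X φ (I' ++ K ++ J') :=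
        Finset.sum_le_sum fun I' hI' => Finset.sum_le_sum fun J' hJ' => hlink I' hI' J' hJ'
    _ = ∑ K ∈ S, ∑ I' ∈ wordFiber π I, ∑ J' ∈ wordFiber π J, zeroExt X φ (I' ++ K ++ J') := by
        simp only [Finset.sum_comm (t := S)]
    _ ≤ ∑ K ∈ S, psiProj X π φ (I ++ K.map π ++ J) :=
        Finset.sum_le_sum fun K _ => sum_zeroExt_linked_le_psiProj hφ I J K

protected theorem LinkSupermult.psiProj (hφ : ∀ I, Lang X I → 0 ≤ φ I) (h : LinkSupermult X N c φ)
    (hc : 0 ≤ c) {T : Finset (List A)} (hT : ∀ K : List A, K.length ∈ N → K ∈ T) :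
    LinkSupermult (blockMap π '' X) N (c / T.card) (psiProj X π φ) := by
  intro I J hI hJ
  let S : Finset (List A) :=
    {K ∈ T | K.length ∈ N ∧ Lang (blockMap π '' X) (I ++ K.map π ++ J)}
  have hS : ∀ K : List A, K.length ∈ N → Lang (blockMap π '' X) (I ++ K.map π ++ J) → K ∈ S :=
    fun K hK hIKJ => Finset.mem_filter.2 ⟨hT K hK, hK, hIKJ⟩
  have hS_nonempty : S.Nonempty := by
    obtain ⟨I', hI', rfl⟩ := lang_image_iff.1 hI
    obtain ⟨J', hJ', rfl⟩ := lang_image_iff.1 hJ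
    obtain ⟨K, hK, hIKJ, -⟩ := h I' J' hI' hJ'
    exact ⟨K, hS K hK (by simpa only [List.map_append] using hIKJ.map π)⟩
  have hcard : S.card * (c / T.card) ≤ c := by
    rw [mul_div_left_comm]
    exact mul_le_of_le_one_right hc
      (div_le_one_of_le₀ (mod_cast Finset.card_filter_le _ _) (Nat.cast_nonneg _))
  have hψ := mul_nonneg (psiProj_nonneg (π := π) hφ I) (psiProj_nonneg (π := π) hφ J)
  have hpigeonhole : ∑ _K ∈ S, c / T.card * (psiProj X π φ I * psiProj X π φ J) ≤
      ∑ K ∈ S, psiProj X π φ (I ++ K.map π ++ J) := by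
    rw [Finset.sum_const, nsmul_eq_mul, ← mul_assoc]
    exact (mul_le_mul_of_nonneg_right hcard hψ).trans (h.mul_psiProj_le_sum hφ hS)
  obtain ⟨K, hK, hle⟩ := Finset.exists_le_of_sum_le hS_nonempty hpigeonhole
  obtain ⟨-, hKN, hIKJ⟩ := Finset.mem_filter.1 hK
  exact ⟨K.map π, by rwa [List.length_map], hIKJ, hle⟩

protected theorem QuasiMult.psiProj (hX : Set.MapsTo shiftMap X X) (hN : BddAbove N)
    (h : QuasiMult X N φ) : QuasiMult (blockMap π '' X) N (psiProj X π φ) := by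
  obtain ⟨hφ, ⟨I, hI, hne, hpos⟩, c, hc, hc1, hsub, hsuper⟩ := h
  obtain ⟨p, hp⟩ := hN
  let T : Finset (List A) := (List.finite_length_le A p).toFinset
  have hT : ∀ K : List A, K.length ∈ N → K ∈ T := fun K hK => by simpa [T] using hp hK
  have hT_card : (1 : ℝ) ≤ T.card := by
    exact_mod_cast Finset.card_pos.2 ⟨[], by simp [T]⟩
  have hψ : ∀ J, Lang (blockMap π '' X) J → 0 ≤ psiProj X π φ J :=
    fun J _ => psiProj_nonneg hφ J
  have hcT : c / T.card ≤ c := div_le_self hc.le hT_card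
  have hcT_pos : 0 < c / T.card := by positivity
  refine ⟨hψ, ⟨I.map π, hI.map π, by simpa using hne, hpos.trans_le (le_psiProj_map hφ hI)⟩,
    c / T.card, hcT_pos, hcT.trans hc1, ?_, hsuper.psiProj hφ hc.le hT⟩
  have hsemiconj : Function.Semiconj (blockMap π) shiftMap shiftMap := fun _ => rfl
  exact (hsub.psiProj hX hφ hc.le).anti (hsemiconj.mapsTo_image hX) hψ hcT_pos hcT

end Projection

theorem weighted_eq_states_stmt_16_general {A B : Type} [Fintype A] {X : Set (ℕ → A)}
    (hX : Set.MapsTo shiftMap X X) (π : A → B) {N : Set ℕ} (hN : BddAbove N) {a : ℝ}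
    (ha : 0 ≤ a) {φ : List A → ℝ} (hφ : QuasiMult X N φ) :
    QuasiMult X N (fun I => φ I ^ a) ∧ QuasiMult (blockMap π '' X) N (psiProj X π φ) :=
  ⟨hφ.rpow hX ha, hφ.psiProj hX hN⟩

/-- Lemma 5.6 / `lem-3.5`: for `φ ∈ D_w(X,p)` and `a > 0`, `φ^a ∈ D_w(X,p)`
and `ψ(J) = Σ_{πI = J} φ(I)` belongs to `D_w(Y,p)`; if `φ ∈ D(X,p)` then `φ^a ∈ D(X,p)` and
`ψ ∈ D(Y,p)`. -/
theorem weighted_eq_states_stmt_16 {A B : Type}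
    [Fintype A] [TopologicalSpace A] [DiscreteTopology A]
    [Fintype B] [TopologicalSpace B] [DiscreteTopology B]
    (X : Set (ℕ → A)) (Y : Set (ℕ → B)) (hX : IsSubshift X) (hY : IsSubshift Y)
    (π : A → B) (hπ : blockMap π '' X = Y)
    (p : ℕ) (a : ℝ) (ha : 0 < a) (φ : List A → ℝ) (hφ : Dw X p φ) :
    Dw X p (fun I => φ I ^ a) ∧ Dw Y p (psiProj X π φ) ∧
      (Ds X p φ → Ds X p (fun I => φ I ^ a) ∧ Ds Y p (psiProj X π φ)) := by
  subst hπ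
  simp only [← quasiMult_Iic_iff, ← quasiMult_singleton_iff] at hφ ⊢
  have general {N : Set ℕ} (hN : BddAbove N) (h : QuasiMult X N φ) :=
    weighted_eq_states_stmt_16_general (Set.mapsTo_iff_image_subset.2 hX.2.2) π hN ha.le h
  exact ⟨(general bddAbove_Iic hφ).1, (general bddAbove_Iic hφ).2, general bddAbove_singleton⟩
end
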